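/- Let X = A_3 be embedded in Y = D_{10} = SO_{20} via the 20-dimensional irreducible representation of highest weight δ = 2ω_2 = (0,2,0), and let λ be one of the half-spin weights λ_9, λ_{10} of Y, so that V_Y(λ) has dimension 2^9 = 512. Then V_Y(λ)↓X = V_X(3ω_1+ω_2+ω_3) ⊕ V_X(ω_1+ω_2+3ω_3), i.e. the restriction is the direct sum of the two (mutually dual) irreducible X-modules of highest weights (3,1,1) and (1,1,3); in particular V_Y(λ)↓X is multiplicity-free. -/

import Mathlib

/-!
# Common framework

Over an algebraically closed field of characteristic zero, finite–dimensional rational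
representations of a simple algebraic group are semisimple and are determined by their
formal characters, i.e. by elements of the group ring of the (rational) weight lattice;
the character of the irreducible module of highest weight `λ` is pinned down by the
Weyl character formula `A_ρ · χ_λ = A_{λ+ρ}`.

Below we model, completely combinatorially:

* type `A_r` : weights are realised by their traceless representatives in `Fin (r+1) → ℚ`
  (the `gl`-coordinates), and the Weyl group is the symmetric group;
* types `B_n, C_n, D_n` : weights are realised in the standard `ε`-coordinates
  `Fin n → ℚ`, and the Weyl group consists of (signed) permutations, with evenly many
  sign changes in type `D`;
* an embedding `X = A_r < Y` (classical of type `t` and rank `n`) in which `X` acts on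
  the natural module `W` of `Y` irreducibly with highest weight `δ` : the weights of `W`
  are `± w i` (plus one zero weight in type `B`), and restriction of characters is induced
  by the map `v ↦ ∑ i, v i • w i` of weight lattices;
* `IsMFRes t n r δ lam` : the restriction to `X` of the irreducible `Y`-module with
  highest weight `lam` is multiplicity-free, i.e. its character is a sum of distinct
  irreducible characters of `X`.

Dominant weights are always recorded by their (natural number) coordinates in the basis
of fundamental weights, `e n k` being the `k`-th fundamental weight (1-indexed).
-/

noncomputable section

namespace MFPaper

/-- The Dynkin type of a classical group `B_n = SO_{2n+1}`, `C_n = Sp_{2n}`, `D_n = SO_{2n}`. -/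
inductive CType | B | C | D
deriving DecidableEq

/-- The character ring: the integral group ring of a rational weight space
with `k` coordinates. -/
abbrev CharRing (k : ℕ) : Type := AddMonoidAlgebra ℤ (Fin k → ℚ)

/-- The formal exponential `e^v` of a weight `v`. -/
def mono {k : ℕ} (v : Fin k → ℚ) : CharRing k := AddMonoidAlgebra.single v 1

/-- `e n k` : the `k`-th fundamental dominant weight (`1 ≤ k ≤ n`, 1-indexed) of a rank `n`
group, recorded by its coordinates in the basis of fundamental weights. -/
def e (n k : ℕ) : Fin n → ℕ := fun i => if (i : ℕ) + 1 = k then 1 else 0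

/-! ### Type `A_r` -/

/-- The partition (`gl`) lift of the dominant weight of `A_r` with coordinates `d`
in the basis of fundamental weights. -/
def partLift (r : ℕ) (d : Fin r → ℕ) : Fin (r + 1) → ℚ := fun i =>
  ∑ j ∈ Finset.univ.filter (fun j : Fin r => (i : ℕ) ≤ (j : ℕ)), (d j : ℚ)

/-- The traceless (`sl`) representative of the dominant weight of `A_r` with coordinates `d`. -/
def slWt (r : ℕ) (d : Fin r → ℕ) : Fin (r + 1) → ℚ := fun i =>
  partLift r d i - (∑ j : Fin r, (((j : ℕ) : ℚ) + 1) * (d j : ℚ)) / (r + 1)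

/-- A lift of the half-sum of the positive roots of `A_r`. -/
def rhoA (r : ℕ) : Fin (r + 1) → ℚ := fun i => (r : ℚ) - (i : ℕ)

/-- The Weyl alternating sum `A_v = ∑_{σ} sgn(σ) e^{σ v}` for type `A_r`. -/
def altA (r : ℕ) (v : Fin (r + 1) → ℚ) : CharRing (r + 1) :=
  ∑ σ : Equiv.Perm (Fin (r + 1)),
    ((Equiv.Perm.sign σ : ℤˣ) : ℤ) • mono (fun i => v (σ i))

/-- `IsCharA r d f` : `f` is the formal character of the irreducible `A_r`-module
of highest weight `d` (Weyl character formula). -/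
def IsCharA (r : ℕ) (d : Fin r → ℕ) (f : CharRing (r + 1)) : Prop :=
  altA r (rhoA r) * f = altA r (slWt r d + rhoA r)

/-- `Decomp r F c` : the character `F` of a representation of `A_r` decomposes as
`∑_μ (c μ) · χ_μ`, i.e. the irreducible of highest weight `μ` occurs in it as a
composition factor with multiplicity `c μ`. -/
def Decomp (r : ℕ) (F : CharRing (r + 1)) (c : (Fin r → ℕ) →₀ ℕ) : Prop :=
  F * altA r (rhoA r) = c.sum fun μ k => (k : ℤ) • altA r (slWt r μ + rhoA r)

/-- The Weyl dimension formula for type `A_r`. -/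
def dimA (r : ℕ) (d : Fin r → ℕ) : ℚ :=
  ∏ p ∈ Finset.univ.filter (fun p : Fin (r + 1) × Fin (r + 1) => (p.1 : ℕ) < (p.2 : ℕ)),
    ((partLift r d p.1 - partLift r d p.2 + ((p.2 : ℕ) : ℚ) - ((p.1 : ℕ) : ℚ)) /
      (((p.2 : ℕ) : ℚ) - ((p.1 : ℕ) : ℚ)))

/-- The self-dual irreducible `A_r`-module of highest weight `d` is *symplectic*
(it carries an invariant alternating form); by Steinberg's criterion this happens
exactly when `⟨d, 2ρ^∨⟩ = ∑ d_k · k(r+1-k)` is odd. -/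
def IsSympWt (r : ℕ) (d : Fin r → ℕ) : Prop :=
  Odd (∑ i : Fin r, d i * ((i : ℕ) + 1) * (r - (i : ℕ)))

/-! ### The classical types `B`, `C`, `D` -/

/-- Convenient access to the `k`-th (0-indexed) coordinate. -/
def cval {n : ℕ} (c : Fin n → ℕ) (k : ℕ) : ℚ := if h : k < n then (c ⟨k, h⟩ : ℚ) else 0

/-- `ε`-coordinates of the dominant weight of the classical group of type `t` and rank `n`
with coordinates `c` in the basis of fundamental weights (Bourbaki numbering). -/
def epsWt (t : CType) (n : ℕ) (c : Fin n → ℕ) : Fin n → ℚ := fun i =>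
  (∑ k ∈ Finset.univ.filter (fun k : Fin n => (i : ℕ) ≤ (k : ℕ)), (c k : ℚ)) -
    (match t with
      | .C => 0
      | .B => cval c (n - 1) / 2
      | .D => (cval c (n - 2) + cval c (n - 1)) / 2)

/-- The half-sum of the positive roots in `ε`-coordinates. -/
def rhoY (t : CType) (n : ℕ) : Fin n → ℚ := fun i =>
  match t with
  | .C => (n : ℚ) - (i : ℕ)
  | .B => (n : ℚ) - (i : ℕ) - 1 / 2
  | .D => (n : ℚ) - 1 - (i : ℕ)

/-- The Weyl alternating sum for the classical group of type `t` and rank `n`: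
the Weyl group consists of the signed permutations of the coordinates,
with evenly many sign changes in type `D`. -/
def altY (t : CType) (n : ℕ) (v : Fin n → ℚ) : CharRing n :=
  ∑ σ : Equiv.Perm (Fin n), ∑ s : Fin n → Bool,
    if t = CType.D ∧ ¬ Even (Finset.univ.filter (fun i => s i = true)).card then 0
    else (((Equiv.Perm.sign σ : ℤˣ) : ℤ) *
          (-1) ^ (Finset.univ.filter (fun i => s i = true)).card) •
      mono (fun i => (if s i then -1 else 1) * v (σ i))

/-- `IsCharY t n c f` : `f` is the formal character of the irreducible module of highest
weight `c` for the classical group of type `t` and rank `n` (Weyl character formula). -/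
def IsCharY (t : CType) (n : ℕ) (c : Fin n → ℕ) (f : CharRing n) : Prop :=
  altY t n (rhoY t n) * f = altY t n (epsWt t n c + rhoY t n)

/-! ### The embedding `X = A_r < Y` via `δ`, and restriction of characters -/

/-- `WtSys t n r δ w` : `w` lists "half" of the weights of the natural module
`W = V_X(δ)` of the classical group `Y` of type `t` and rank `n`, for `X = A_r`:
the weights of `W` (with multiplicity) are exactly the `± w i`, together with one
extra zero weight in type `B`.  Such a `w` records a maximal torus embedding
`T_X → T_Y` realising the irreducible embedding `X < Y = SO(W)` or `Sp(W)` given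
by the representation of highest weight `δ`. -/
def WtSys (t : CType) (n r : ℕ) (δ : Fin r → ℕ)
    (w : Fin n → (Fin (r + 1) → ℚ)) : Prop :=
  ((∑ i : Fin n, (mono (w i) + mono (-(w i)))) +
      (if t = CType.B then mono (0 : Fin (r + 1) → ℚ) else 0)) * altA r (rhoA r)
    = altA r (slWt r δ + rhoA r)

/-- Restriction of characters from `Y` to `X = A_r` along the torus embedding
recorded by `w`. -/
def resChar {n r : ℕ} (w : Fin n → (Fin (r + 1) → ℚ)) (F : CharRing n) :
    CharRing (r + 1) :=
  AddMonoidAlgebra.mapDomain (fun v : Fin n → ℚ => ∑ i : Fin n, v i • w i) F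

/-- `IsMFRes t n r δ lam` : in the embedding `X = A_r < Y` (the classical group of type
`t` and rank `n`) given by the irreducible representation of highest weight `δ`, the
restriction to `X` of the irreducible `Y`-module of highest weight `lam` is
multiplicity-free: its character is a sum of *distinct* irreducible characters of `X`. -/
def IsMFRes (t : CType) (n r : ℕ) (δ : Fin r → ℕ) (lam : Fin n → ℕ) : Prop :=
  ∀ w, WtSys t n r δ w → ∀ f, IsCharY t n lam f →
    ∃ c : (Fin r → ℕ) →₀ ℕ, Decomp r (resChar w f) c ∧ ∀ μ, c μ ≤ 1

/-- The operation `e^v ↦ e^{k·v}` on characters (Adams operation on the torus),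
used to express symmetric and exterior powers of characters. -/
def pw {m : ℕ} (k : ℕ) (F : CharRing m) : CharRing m :=
  AddMonoidAlgebra.mapDomain (fun v : Fin m → ℚ => (k : ℚ) • v) F

/-- The irreducible `A_r`-module of highest weight `d` carries a nonzero invariant
*symmetric* bilinear form, i.e. the trivial module occurs in its symmetric square
(whose character `S` satisfies `2S = f² + f^{[2]}`). -/
def HasSymForm (r : ℕ) (d : Fin r → ℕ) : Prop :=
  ∀ f, IsCharA r d f →
    ∃ c : (Fin r → ℕ) →₀ ℕ,
      (f * f + pw 2 f) * altA r (rhoA r)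
          = c.sum (fun μ k => ((2 * k : ℕ) : ℤ) • altA r (slWt r μ + rhoA r)) ∧ 1 ≤ c 0

/-- The irreducible `A_r`-module of highest weight `d` carries a nonzero invariant
*alternating* bilinear form, i.e. the trivial module occurs in its exterior square
(whose character `Λ` satisfies `2Λ = f² - f^{[2]}`). -/
def HasAltForm (r : ℕ) (d : Fin r → ℕ) : Prop :=
  ∀ f, IsCharA r d f →
    ∃ c : (Fin r → ℕ) →₀ ℕ,
      (f * f - pw 2 f) * altA r (rhoA r)
          = c.sum (fun μ k => ((2 * k : ℕ) : ℤ) • altA r (slWt r μ + rhoA r)) ∧ 1 ≤ c 0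

end MFPaper

open MFPaper

namespace SpinAux

lemma mono_mul {k : ℕ} (a b : Fin k → ℚ) : mono a * mono b = mono (a + b) := by
  simp [mono, AddMonoidAlgebra.single_mul_single]

lemma mono_zero {k : ℕ} : mono (0 : Fin k → ℚ) = 1 := rfl

lemma mono_inj {k : ℕ} {a b : Fin k → ℚ} (h : mono a = mono b) : a = b := by
  have := congrArg (fun f : CharRing k => f.coeff a) h
  by_contra hne
  simp [mono, Ne.symm hne] at this

lemma mono_prod {k : ℕ} {ι : Type*} (s : Finset ι) (a : ι → Fin k → ℚ) :
    ∏ i ∈ s, mono (a i) = mono (∑ i ∈ s, a i) := by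
  classical
  induction s using Finset.induction_on with
  | empty => simp [mono_zero]
  | insert i s hi ih => rw [Finset.prod_insert hi, Finset.sum_insert hi, ih, mono_mul]

/-- res as ring hom -/
def resHom {n r : ℕ} (w : Fin n → (Fin (r + 1) → ℚ)) : CharRing n →+* CharRing (r+1) :=
  AddMonoidAlgebra.mapDomainRingHom ℤ
    ({ toFun := fun v : Fin n → ℚ => ∑ i : Fin n, v i • w i
       map_zero' := by simp
       map_add' := by intro a b; simp [add_smul, Finset.sum_add_distrib] } : (Fin n → ℚ) →+ (Fin (r+1) → ℚ))

lemma resHom_apply {n r : ℕ} (w : Fin n → (Fin (r + 1) → ℚ)) (F) : resHom w F = resChar w F := rfl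

lemma resHom_mono {n r : ℕ} (w : Fin n → (Fin (r + 1) → ℚ)) (v) :
    resHom w (mono v) = mono (∑ i, v i • w i) := by
  rw [resHom_apply]; unfold resChar mono
  rw [AddMonoidAlgebra.mapDomain_single]

/-- augmentation -/
def aug (k : ℕ) : CharRing k →+* ℤ :=
  ((AddMonoidAlgebra.lift ℤ ℤ (Fin k → ℚ)) 1 : CharRing k →ₐ[ℤ] ℤ).toRingHom

lemma aug_mono {k : ℕ} (v : Fin k → ℚ) : aug k (mono v) = 1 := by
  simp [aug, mono]

lemma multiset_inj {k : ℕ} (M N : Multiset (Fin k → ℚ))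
    (h : (M.map mono).sum = (N.map mono).sum) : M = N := by
  classical
  have key : ∀ (M : Multiset (Fin k → ℚ)) v, ((M.map mono).sum).coeff v = (M.count v : ℤ) := by
    intro M v
    induction M using Multiset.induction_on with
    | empty => simp
    | cons a s ih =>
      rw [Multiset.map_cons, Multiset.sum_cons, Multiset.count_cons, AddMonoidAlgebra.coeff_add, Finsupp.add_apply, ih]
      simp [mono, Finsupp.single_apply, eq_comm]
      ring
  ext v
  have := congrArg (fun f : CharRing k => f.coeff v) h
  simp only [key] at this
  exact_mod_cast this

/-- matrix -/
def MM {n : ℕ} (ε : ℤ) (v : Fin n → ℚ) : Matrix (Fin n) (Fin n) (CharRing n) :=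
  Matrix.of fun j i => mono (Pi.single i (v j)) + (ε : CharRing n) * mono (Pi.single i (-v j))

lemma two_altY {n : ℕ} (v : Fin n → ℚ) :
    2 * altY CType.D n v = (MM 1 v).det + (MM (-1) v).det := by
  have key : ∀ ε : ℤ, (MM ε v).det = ∑ σ : Equiv.Perm (Fin n), ∑ s : Fin n → Bool,
      (((Equiv.Perm.sign σ : ℤˣ) : ℤ) * ε ^ (Finset.univ.filter (fun i => s i = true)).card) •
      mono (fun i => (if s i then -1 else 1) * v (σ i)) := by
    intro ε
    rw [Matrix.det_apply']
    refine Finset.sum_congr rfl fun σ _ => ?_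
    have h1 : ∀ i, MM ε v (σ i) i = ∑ b : Bool, (if b then (ε : CharRing n) else 1) *
        mono (Pi.single i ((if b then -1 else 1) * v (σ i))) := by
      intro i; simp [MM]; ring
    simp only [h1]
    rw [Finset.prod_univ_sum, Fintype.piFinset_univ, Finset.mul_sum]
    refine Finset.sum_congr rfl fun s _ => ?_
    rw [Finset.prod_mul_distrib, mono_prod, Finset.prod_ite]
    simp only [Finset.prod_const, one_pow, mul_one]
    rw [Finset.univ_sum_single (fun i => (if s i = true then (-1:ℚ) else 1) * v (σ i))]
    rw [zsmul_eq_mul]; push_cast; ring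
  rw [key, key, altY, ← Finset.sum_add_distrib, Finset.mul_sum]
  refine Finset.sum_congr rfl fun σ _ => ?_
  rw [← Finset.sum_add_distrib, Finset.mul_sum]
  refine Finset.sum_congr rfl fun s _ => ?_
  by_cases hs : Even (Finset.univ.filter (fun i => s i = true)).card
  · simp [hs, hs.neg_one_pow, two_mul]
  · simp [hs, (Nat.not_even_iff_odd.1 hs).neg_one_pow]

lemma altY_ne {n : ℕ} (p : Fin n → ℚ) (l : Fin n)
    (hinj : ∀ a b : Fin n, |p a| = |p b| → a = b) (hl : p l = 0) : altY CType.D n p ≠ 0 := by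
  intro h
  have hc := congrArg (fun f : CharRing n => f.coeff p) h
  have hcoef : ∀ (z : ℤ) (u : Fin n → ℚ), (z • mono u : CharRing n).coeff p =
      if u = p then z else 0 := by
    intro z u
    simp [mono, Finsupp.single_apply]
  simp only [altY, AddMonoidAlgebra.coeff_sum, Finsupp.finsetSum_apply] at hc
  rw [Finset.sum_eq_single (1 : Equiv.Perm (Fin n)), Finset.sum_eq_single (fun _ => false)] at hc
  · simp only [true_and] at hc
    rw [if_neg (by simp), hcoef, if_pos (by funext i; simp)] at hc
    simp at hc
  · intro s _ hs
    split_ifs with h1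
    · simp
    · rw [hcoef, if_neg]
      intro hu
      apply hs
      have hf : ∀ i : Fin n, i ≠ l → s i = false := by
        intro i hi
        by_contra hsi
        have hsi' : s i = true := by simpa using hsi
        have := congrFun hu i
        simp only [hsi', if_true, Equiv.Perm.one_apply] at this
        have h0 : p i = 0 := by linarith
        apply hi
        apply hinj
        rw [h0, hl]
      funext i
      by_cases hi : i = l
      · rw [hi]
        by_contra hsi
        have hsi' : s l = true := by simpa using hsi
        apply h1
        refine ⟨trivial, ?_⟩
        have : (Finset.univ.filter (fun i => s i = true)) = {l} := by
          ext j
          by_cases hj : j = l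
          · simp [hj, hsi']
          · simp [hj, hf j hj]
        rw [this]; simp
      · exact hf i hi
  · simp
  · intro σ _ hσ
    apply Finset.sum_eq_zero
    intro s _
    split_ifs with h1
    · simp
    · rw [hcoef, if_neg]
      intro hu
      apply hσ
      ext i
      have := congrFun hu i
      have h2 : |p (σ i)| = |p i| := by
        rw [← this, abs_mul]; split_ifs <;> simp
      simp [hinj _ _ h2]
  · simp

lemma altY_rho_ne : altY CType.D 10 (rhoY CType.D 10) ≠ 0 := by
  have hinj : ∀ a b : Fin 10, |rhoY CType.D 10 a| = |rhoY CType.D 10 b| → a = b := by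
    intro a b hab
    have e1 : ∀ a : Fin 10, |rhoY CType.D 10 a| = rhoY CType.D 10 a := by
      intro a
      apply abs_of_nonneg
      have : (a : ℕ) ≤ 9 := by omega
      have : ((a : ℕ) : ℚ) ≤ 9 := by exact_mod_cast this
      simp only [rhoY]; push_cast; linarith
    rw [e1, e1] at hab
    simp only [rhoY] at hab
    have : ((a : ℕ) : ℚ) = (b : ℕ) := by linarith
    exact Fin.ext (by exact_mod_cast this)
  refine altY_ne _ 9 hinj ?_
  simp [rhoY]; norm_num

lemma two_ne {k : ℕ} : (2 : CharRing k) ≠ 0 := by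
  intro h
  have := congrArg (aug k) h
  rw [map_ofNat, map_zero] at this
  norm_num at this

/-- half weights -/
def UU (ε : ℤ) (i : Fin 10) : CharRing 10 :=
  mono (Pi.single i (1/2)) + (ε : CharRing 10) * mono (Pi.single i (-(1/2)))

/-- shifted rho -/
def vv (j : Fin 10) : ℚ := 9 - ((j : ℕ) : ℚ) + 1/2

/-- transition -/
def TT (ε : ℤ) : Matrix (Fin 10) (Fin 10) (CharRing 10) :=
  Matrix.of fun j k => if k = j then (if (j : ℕ) = 9 then 2 else 1) else
    if (k : ℕ) = j + 1 then (ε : CharRing 10) else 0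

lemma det_TT (ε : ℤ) : (TT ε).det = 2 := by
  rw [Matrix.det_of_isUpperTriangular]
  · simp [TT, Fin.prod_univ_succ]
  · intro i j hij
    have h : (j : ℕ) < i := hij
    have h1 : j ≠ i := by rintro rfl; omega
    have h2 : ¬ ((j : ℕ) = i + 1) := by omega
    simp [TT, h1, h2]

lemma rho_mul (ε : ℤ) (hε : ε * ε = 1) :
    (∏ i, UU ε i) * (MM 1 (rhoY CType.D 10)).det = 2 * (MM ε vv).det := by
  rw [← det_TT ε, ← Matrix.det_mul, ← Matrix.det_mul_row]
  congr 1
  ext1 j i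
  have hε' : (ε : CharRing 10) * (ε : CharRing 10) = 1 := by rw [← Int.cast_mul, hε, Int.cast_one]
  have key : ∀ q : ℚ, (mono (Pi.single i q) + (1 : CharRing 10) * mono (Pi.single i (-q))) * UU ε i
     = (mono (Pi.single i (q + 1/2)) + (ε : CharRing 10) * mono (Pi.single i (-(q + 1/2)))) +
      (ε : CharRing 10) * (mono (Pi.single i (q - 1/2)) + (ε : CharRing 10) * mono (Pi.single i (-(q - 1/2)))) := by
    intro q
    have e1 : ∀ a b : ℚ, mono (Pi.single i (a + b)) = mono (Pi.single i a) * (mono (Pi.single i b) : CharRing 10) := by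
      intro a b; rw [mono_mul, ← Pi.single_add]
    have a1 := e1 q (1/2)
    have a2 := e1 (-q) (-(1/2))
    have a3 := e1 q (-(1/2))
    have a4 := e1 (-q) (1/2)
    rw [show -(q + 1/2) = -q + -(1/2) by ring, show -(q - 1/2) = -q + 1/2 by ring,
      show q - 1/2 = q + -(1/2) by ring, a1, a2, a3, a4, UU]
    linear_combination (-(mono (Pi.single i (-q)) * mono (Pi.single i (1 / 2)))) * hε'
  rw [Matrix.mul_apply]
  have hL : UU ε i * MM 1 (rhoY CType.D 10) j i =
    (mono (Pi.single i (9 - ((j:ℕ):ℚ))) + (1 : CharRing 10) * mono (Pi.single i (-(9 - ((j:ℕ):ℚ))))) * UU ε i := by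
    have : rhoY CType.D 10 j = 9 - ((j:ℕ):ℚ) := by simp only [rhoY]; push_cast; ring
    simp only [MM, Matrix.of_apply, this]; push_cast; ring
  refine hL.trans ?_
  by_cases hj : (j : ℕ) = 9
  · rw [Finset.sum_eq_single j]
    · simp [TT, MM, vv, hj, UU, mono_zero]
      norm_num
    · intro b _ hb
      have h2 : ¬ ((b : ℕ) = j + 1) := by omega
      simp [TT, hb, h2]
    · simp
  · rw [key]
    have hj1 : (j : ℕ) + 1 < 10 := by omega
    rw [Finset.sum_eq_add_of_mem j ⟨j + 1, hj1⟩ (Finset.mem_univ _) (Finset.mem_univ _)]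
    · simp only [TT, MM, vv, Matrix.of_apply, if_true, hj, if_false]
      rw [if_neg (by intro h; simpa using congrArg Fin.val h), one_mul]
      rw [show (9 - ((j:ℕ):ℚ) - 1/2) = 9 - (((j:ℕ)+1 : ℕ) : ℚ) + 1/2 by push_cast; ring]
    · intro h; simpa using congrArg Fin.val h
    · intro b _ hb
      have h2 : ¬ ((b : ℕ) = j + 1) := fun h => hb.2 (Fin.ext h)
      simp [TT, hb.1, h2]

lemma MM_neg_rho : (MM (-1) (rhoY CType.D 10)).det = 0 := by
  apply Matrix.det_eq_zero_of_row_eq_zero 9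
  intro j
  have : rhoY CType.D 10 9 = 0 := by simp [rhoY]; norm_num
  simp [MM, this, mono_zero]

lemma eps10 : epsWt CType.D 10 (e 10 10) + rhoY CType.D 10 = vv := by
  funext j
  simp only [Pi.add_apply, epsWt, Finset.sum_filter, Fin.sum_univ_succ, Fin.sum_univ_zero]
  fin_cases j <;> simp [e, rhoY, vv, cval] <;> norm_num

lemma eps9 : epsWt CType.D 10 (e 10 9) + rhoY CType.D 10 =
    fun j => if j = 9 then - vv j else vv j := by
  funext j
  simp only [Pi.add_apply, epsWt, Finset.sum_filter, Fin.sum_univ_succ, Fin.sum_univ_zero]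
  fin_cases j <;> simp [e, rhoY, vv, cval] <;> norm_num

lemma MM_flip (ε : ℤ) (hε : ε * ε = 1) :
    (MM ε (fun j => if j = 9 then - vv j else vv j)).det = (ε : CharRing 10) * (MM ε vv).det := by
  have hε' : (ε : CharRing 10) * (ε : CharRing 10) = 1 := by rw [← Int.cast_mul, hε, Int.cast_one]
  have : MM ε (fun j => if j = 9 then - vv j else vv j) =
      Matrix.of fun j i => (if j = 9 then (ε : CharRing 10) else 1) * MM ε vv j i := by
    ext1 j i
    by_cases h : j = 9
    · simp only [MM, Matrix.of_apply, h, if_true, neg_neg]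
      linear_combination (-mono (Pi.single i (-vv 9))) * hε'
    · simp [MM, h]
  rw [this, Matrix.det_mul_column]
  congr 1
  simp

lemma spin_char (lam : Fin 10 → ℕ) (hlam : lam = e 10 9 ∨ lam = e 10 10)
    (f) (hf : IsCharY CType.D 10 lam f) :
    ∃ η : ℤ, 2 * f = (∏ i, UU 1 i) + (η : CharRing 10) * ∏ i, UU (-1) i := by
  have h1 := rho_mul 1 (by norm_num)
  have h2 := rho_mul (-1) (by norm_num)
  have h3 := two_altY (rhoY CType.D 10)
  rw [MM_neg_rho, add_zero] at h3
  have hne : 2 * altY CType.D 10 (rhoY CType.D 10) ≠ 0 := mul_ne_zero two_ne altY_rho_ne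
  unfold IsCharY at hf
  rcases hlam with rfl | rfl
  · rw [eps9] at hf
    have h4 := two_altY (fun j => if j = 9 then - vv j else vv j)
    rw [MM_flip 1 (by norm_num), MM_flip (-1) (by norm_num)] at h4
    refine ⟨-1, mul_left_cancel₀ hne ?_⟩
    push_cast at h4 ⊢
    linear_combination 4 * hf - h1 + h2 + 2 * h4 - ((∏ i, UU 1 i) - ∏ i, UU (-1) i) * h3
  · rw [eps10] at hf
    have h4 := two_altY vv
    refine ⟨1, mul_left_cancel₀ hne ?_⟩
    push_cast at h4 ⊢
    linear_combination 4 * hf - h1 - h2 + 2 * h4 - ((∏ i, UU 1 i) + ∏ i, UU (-1) i) * h3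

/-- g -/
def gg {k : ℕ} (v : Fin k → ℚ) : CharRing k := mono ((1/2 : ℚ) • v) + mono (-((1/2 : ℚ) • v))

lemma res_UU (w : Fin 10 → (Fin 4 → ℚ)) (ε : ℤ) (i : Fin 10) :
    resHom w (UU ε i) = mono ((1/2 : ℚ) • w i) + (ε : CharRing 4) * mono (-((1/2 : ℚ) • w i)) := by
  have : ∀ q : ℚ, ∑ x, (Pi.single i q : Fin 10 → ℚ) x • w x = q • w i := by
    intro q
    rw [Finset.sum_eq_single i] <;> simp +contextual [Pi.single_apply]
  rw [UU, map_add, map_mul, resHom_mono, resHom_mono, map_intCast, this, this, neg_smul]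

lemma res_spin (lam : Fin 10 → ℕ) (hlam : lam = e 10 9 ∨ lam = e 10 10)
    (f) (hf : IsCharY CType.D 10 lam f) (w : Fin 10 → (Fin 4 → ℚ)) (i₀ : Fin 10) (h0 : w i₀ = 0) :
    2 * resChar w f = ∏ i, gg (w i) := by
  obtain ⟨η, h⟩ := spin_char lam hlam f hf
  have := congrArg (resHom w) h
  rw [map_mul, map_add, map_mul, map_prod, map_prod, map_ofNat] at this
  rw [Finset.prod_eq_zero (i := i₀) (f := fun i => resHom w (UU (-1) i)) (Finset.mem_univ _)] at this
  · rw [mul_zero, add_zero] at this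
    rw [← resHom_apply]
    refine this.trans (Finset.prod_congr rfl fun i _ => ?_)
    rw [res_UU, gg]; simp
  · rw [res_UU, h0]; simp

lemma altA_det {r : ℕ} (v : Fin (r+1) → ℚ) : altA r v =
    (Matrix.of fun j i => (mono (Pi.single i (v j)) : CharRing (r+1))).det := by
  rw [Matrix.det_apply', altA]
  refine Finset.sum_congr rfl fun σ _ => ?_
  simp only [Matrix.of_apply]
  rw [mono_prod, Finset.univ_sum_single (fun i => v (σ i)), zsmul_eq_mul]

/-- T -/
def tt (i : Fin 4) : CharRing 4 := mono (Pi.single i 1)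
/-- h -/
def hh : CharRing 4 := mono (fun _ => -(1/2))

lemma tt_pow (i : Fin 4) (n : ℕ) : tt i ^ n = mono (Pi.single i (n : ℚ)) := by
  induction n with
  | zero => simp [mono_zero]
  | succ n ih => rw [pow_succ, ih, tt, mono_mul, ← Pi.single_add]; push_cast; rfl

lemma hh_pow (n : ℕ) : hh ^ n = mono (fun _ => -(n : ℚ) / 2) := by
  induction n with
  | zero => simp [← mono_zero]; rfl
  | succ n ih =>
    rw [pow_succ, ih, hh, mono_mul]; congr 1; funext i
    simp only [Pi.add_apply]; push_cast; ring

lemma altA_shift (v : Fin 4 → ℚ) (n : Fin 4 → ℕ) (m : ℕ) (h : ∀ i, v i = n i - (m : ℚ) / 2) :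
    altA 3 v = hh ^ m * (Matrix.of fun j i => tt i ^ n j).det := by
  rw [hh_pow, altA, Matrix.det_apply', Finset.mul_sum]
  refine Finset.sum_congr rfl fun σ _ => ?_
  simp only [Matrix.of_apply, tt_pow]
  rw [mono_prod, Finset.univ_sum_single (fun i => (n (σ i) : ℚ)), zsmul_eq_mul, mul_left_comm, mono_mul]
  congr 2
  funext i
  simp only [Pi.add_apply, h]; ring

lemma hT : hh ^ 2 * (tt 0 * tt 1 * tt 2 * tt 3) = 1 := by
  rw [hh_pow, tt, tt, tt, tt, mono_mul, mono_mul, mono_mul, mono_mul, ← mono_zero]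
  congr 1
  funext i
  fin_cases i <;> simp [Pi.single_apply] 

lemma alt_rho : altA 3 (rhoA 3) = (tt 0 - tt 1) * (tt 0 - tt 2) * (tt 0 - tt 3) * (tt 1 - tt 2)
    * (tt 1 - tt 3) * (tt 2 - tt 3) := by
  rw [altA_shift _ ![3,2,1,0] 0 (by intro i; fin_cases i <;> simp [rhoA] <;> norm_num)]
  simp [Matrix.det_succ_row_zero, Fin.sum_univ_succ, Fin.succAbove]
  ring

lemma tt_ne {i j : Fin 4} (h : i ≠ j) : tt i - tt j ≠ 0 := by
  intro h1
  have := congrFun (mono_inj (sub_eq_zero.1 h1)) i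
  simp [Pi.single_apply, h] at this

lemma alt_rho_ne : altA 3 (rhoA 3) ≠ 0 := by
  rw [alt_rho]
  refine mul_ne_zero (mul_ne_zero (mul_ne_zero (mul_ne_zero (mul_ne_zero ?_ ?_) ?_) ?_) ?_) ?_ <;>
  exact tt_ne (by decide)

/-- explicit half-system of weights -/
def w0 : Fin 10 → (Fin 4 → ℚ) :=
  ![![1,1,-1,-1], ![1,-1,1,-1], ![1,-1,-1,1], ![1,-1,0,0], ![1,0,-1,0], ![1,0,0,-1],
    ![0,1,-1,0], ![0,1,0,-1], ![0,0,1,-1], 0]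

lemma monoN (v : Fin 4 → ℚ) (n : Fin 4 → ℕ) (m : ℕ) (h : ∀ i, v i = n i - (m : ℚ) / 2) :
    mono v = hh ^ m * (tt 0 ^ n 0 * tt 1 ^ n 1 * tt 2 ^ n 2 * tt 3 ^ n 3) := by
  simp only [hh_pow, tt_pow, mono_mul]
  congr 1
  funext i
  rw [h]
  fin_cases i <;> simp [Pi.single_apply] <;> ring

lemma slWt020 : ∀ i, (slWt 3 (2 • e 3 2) + rhoA 3) i = ((![5,4,1,0] : Fin 4 → ℕ) i : ℚ) - ((2:ℕ):ℚ)/2 := by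
  intro i; fin_cases i <;> simp [slWt, partLift, rhoA, e, Finset.sum_filter, Fin.sum_univ_succ] <;> norm_num

lemma slWt311 : ∀ i, (slWt 3 ![3,1,1] + rhoA 3) i = ((![8,4,2,0] : Fin 4 → ℕ) i : ℚ) - ((4:ℕ):ℚ)/2 := by
  intro i; fin_cases i <;> simp [slWt, partLift, rhoA, e, Finset.sum_filter, Fin.sum_univ_succ] <;> norm_num

lemma slWt113 : ∀ i, (slWt 3 ![1,1,3] + rhoA 3) i = ((![8,6,4,0] : Fin 4 → ℕ) i : ℚ) - ((6:ℕ):ℚ)/2 := by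
  intro i; fin_cases i <;> simp [slWt, partLift, rhoA, e, Finset.sum_filter, Fin.sum_univ_succ] <;> norm_num

lemma wtsys0 : (∑ i, (mono (w0 i) + mono (-(w0 i)))) * altA 3 (rhoA 3) =
    altA 3 (slWt 3 (2 • e 3 2) + rhoA 3) := by
  rw [altA_shift _ _ _ slWt020, alt_rho]
  have hz : (mono (0 : Fin 4 → ℚ)) = hh ^ 2 * (tt 0 * tt 1 * tt 2 * tt 3) := by rw [hT, mono_zero]
  simp only [Fin.sum_univ_succ, Fin.sum_univ_zero, w0]
  simp [Matrix.det_succ_row_zero, Fin.sum_univ_succ, Fin.succAbove]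
  rw [hz,
    monoN ![1,1,-1,-1] ![2,2,0,0] 2, monoN ![1,-1,1,-1] ![2,0,2,0] 2, monoN ![1,-1,-1,1] ![2,0,0,2] 2,
    monoN ![-1,-1,1,1] ![0,0,2,2] 2, monoN ![-1,1,-1,1] ![0,2,0,2] 2, monoN ![-1,1,1,-1] ![0,2,2,0] 2,
    monoN ![1,-1,0,0] ![2,0,1,1] 2, monoN ![1,0,-1,0] ![2,1,0,1] 2, monoN ![1,0,0,-1] ![2,1,1,0] 2,
    monoN ![-1,1,0,0] ![0,2,1,1] 2, monoN ![-1,0,1,0] ![0,1,2,1] 2, monoN ![-1,0,0,1] ![0,1,1,2] 2,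
    monoN ![0,1,-1,0] ![1,2,0,1] 2, monoN ![0,1,0,-1] ![1,2,1,0] 2, monoN ![0,0,1,-1] ![1,1,2,0] 2,
    monoN ![0,-1,1,0] ![1,0,2,1] 2, monoN ![0,-1,0,1] ![1,0,1,2] 2, monoN ![0,0,-1,1] ![1,1,0,2] 2]
  · simp
    ring
  all_goals intro i; fin_cases i <;> simp <;> norm_num

/-- weights multiset -/
def MS (w : Fin 10 → (Fin 4 → ℚ)) : Multiset (Fin 4 → ℚ) :=
  Finset.univ.val.map w + Finset.univ.val.map (fun i => -(w i))

lemma MS_eq (w) (hw : WtSys CType.D 10 3 (2 • e 3 2) w) : MS w = MS w0 := by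
  apply multiset_inj
  have key : ∀ w, ((MS w).map mono).sum = ∑ i, (mono (w i) + mono (-(w i))) := by
    intro w
    rw [MS, Multiset.map_add, Multiset.sum_add, Multiset.map_map, Multiset.map_map, Finset.sum_add_distrib]
    rfl
  rw [key, key]
  apply mul_right_cancel₀ alt_rho_ne
  rw [wtsys0]
  simpa [WtSys] using hw

lemma gg_neg {k : ℕ} (v : Fin k → ℚ) : gg (-v) = gg v := by
  simp [gg, add_comm]

lemma prod_gg (w) (hw : WtSys CType.D 10 3 (2 • e 3 2) w) :
    ∏ i, gg (w i) = ∏ i, gg (w0 i) := by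
  have key : ∀ w : Fin 10 → (Fin 4 → ℚ), ((MS w).map gg).prod = (∏ i, gg (w i)) ^ 2 := by
    intro w
    rw [MS, Multiset.map_add, Multiset.prod_add, Multiset.map_map, Multiset.map_map, sq]
    have h : (gg ∘ fun i => -(w i)) = fun i => gg (w i) := by
      funext i; exact gg_neg _
    rw [h]; rfl
  have haug : ∀ w : Fin 10 → (Fin 4 → ℚ), aug 4 (∏ i, gg (w i)) = 1024 := by
    intro w
    rw [map_prod]
    have h : ∀ i, aug 4 (gg (w i)) = 2 := by
      intro i; rw [gg, map_add, aug_mono, aug_mono]; norm_num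
    rw [Finset.prod_congr rfl (fun i _ => h i), Finset.prod_const, Finset.card_univ, Fintype.card_fin]
    norm_num
  have h2 : (∏ i, gg (w i)) ^ 2 = (∏ i, gg (w0 i)) ^ 2 := by
    rw [← key, ← key, MS_eq w hw]
  have hw1 := haug w
  have hw2 := haug w0
  clear key haug
  generalize (∏ i, gg (w i)) = P at *
  generalize (∏ i, gg (w0 i)) = Q at *
  rcases sq_eq_sq_iff_eq_or_eq_neg.1 h2 with h | h
  · exact h
  · have := congrArg (aug 4) h
    rw [map_neg, hw1, hw2] at this
    norm_num at this

lemma exists_zero (w) (hw : WtSys CType.D 10 3 (2 • e 3 2) w) : ∃ i, w i = 0 := by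
  have : (0 : Fin 4 → ℚ) ∈ MS w := by
    rw [MS_eq w hw, MS, Multiset.mem_add]
    left
    exact Multiset.mem_map.2 ⟨9, Finset.mem_univ_val _, rfl⟩
  rw [MS, Multiset.mem_add, Multiset.mem_map, Multiset.mem_map] at this
  rcases this with ⟨i, _, h⟩ | ⟨i, _, h⟩
  · exact ⟨i, h⟩
  · exact ⟨i, neg_eq_zero.1 h⟩

lemma gg_root (v c : Fin 4 → ℚ) (i j : Fin 4)
    (h1 : (1/2 : ℚ) • v = c + Pi.single i 1) (h2 : -((1/2 : ℚ) • v) = c + Pi.single j 1) :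
    gg v = mono c * (tt i + tt j) := by
  rw [gg, h2, h1, ← mono_mul, ← mono_mul, tt, tt]; ring

lemma gg_big (v : Fin 4 → ℚ) (i j k l : Fin 4)
    (h1 : (1/2 : ℚ) • v = (fun _ => -(1/2)) + Pi.single i 1 + Pi.single j 1)
    (h2 : -((1/2 : ℚ) • v) = (fun _ => -(1/2)) + Pi.single k 1 + Pi.single l 1) :
    gg v = hh * (tt i * tt j + tt k * tt l) := by
  rw [gg, h2, h1, ← mono_mul, ← mono_mul, ← mono_mul, ← mono_mul, tt, tt, tt, tt, hh]; ring

lemma prod_w0 : ∏ i, gg (w0 i) = 2 * hh ^ 6 * ((tt 0 * tt 1 + tt 2 * tt 3) * (tt 0 * tt 2 + tt 1 * tt 3)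
    * (tt 0 * tt 3 + tt 1 * tt 2) * ((tt 0 + tt 1) * (tt 0 + tt 2) * (tt 0 + tt 3) * (tt 1 + tt 2)
    * (tt 1 + tt 3) * (tt 2 + tt 3))) := by
  have hc : mono ![-(1/2),-(1/2),0,0] * mono ![-(1/2),0,-(1/2),0] * mono ![-(1/2),0,0,-(1/2)] *
    mono ![0,-(1/2),-(1/2),0] * mono ![0,-(1/2),0,-(1/2)] * mono ![0,0,-(1/2),-(1/2)] = hh ^ 3 := by
    simp only [mono_mul, hh_pow]
    congr 1
    funext i; fin_cases i <;> simp <;> norm_num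
  have h9 : gg (0 : Fin 4 → ℚ) = 2 := by simp [gg, mono_zero]; norm_num
  simp only [Fin.prod_univ_succ, Fin.prod_univ_zero, w0]
  simp only [Matrix.cons_val_zero, Matrix.cons_val_succ]
  rw [h9, gg_big ![1,1,-1,-1] 0 1 2 3, gg_big ![1,-1,1,-1] 0 2 1 3, gg_big ![1,-1,-1,1] 0 3 1 2,
    gg_root ![1,-1,0,0] ![-(1/2),-(1/2),0,0] 0 1, gg_root ![1,0,-1,0] ![-(1/2),0,-(1/2),0] 0 2,
    gg_root ![1,0,0,-1] ![-(1/2),0,0,-(1/2)] 0 3, gg_root ![0,1,-1,0] ![0,-(1/2),-(1/2),0] 1 2,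
    gg_root ![0,1,0,-1] ![0,-(1/2),0,-(1/2)] 1 3, gg_root ![0,0,1,-1] ![0,0,-(1/2),-(1/2)] 2 3]
  · rw [show hh ^ 6 = hh ^ 3 * hh ^ 3 by ring]
    nth_rewrite 2 [← hc]
    ring
  all_goals funext i; fin_cases i <;> simp [Pi.single_apply] <;> norm_num

lemma final_id : (∏ i, gg (w0 i)) * altA 3 (rhoA 3) =
    2 * (altA 3 (slWt 3 ![3, 1, 1] + rhoA 3) + altA 3 (slWt 3 ![1, 1, 3] + rhoA 3)) := by
  rw [altA_shift _ _ _ slWt311, altA_shift _ _ _ slWt113, alt_rho, prod_w0]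
  have h4 : hh ^ 4 = hh ^ 6 * (tt 0 * tt 1 * tt 2 * tt 3) := by
    linear_combination (-hh ^ 4) * hT
  rw [h4]
  simp [Matrix.det_succ_row_zero, Fin.sum_univ_succ, Fin.succAbove]
  ring

lemma part1 (lam : Fin 10 → ℕ) (hlam : lam = e 10 9 ∨ lam = e 10 10)
    (w) (hw : WtSys CType.D 10 3 (2 • e 3 2) w) (f) (hf : IsCharY CType.D 10 lam f) :
    resChar w f * altA 3 (rhoA 3)
      = altA 3 (slWt 3 ![3, 1, 1] + rhoA 3) + altA 3 (slWt 3 ![1, 1, 3] + rhoA 3) := by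
  obtain ⟨i, hi⟩ := exists_zero w hw
  apply mul_left_cancel₀ two_ne
  rw [← final_id, ← prod_gg w hw, ← res_spin lam hlam f hf w i hi]; ring

end SpinAux

/-- **Equation (11.3) (half-spin modules for `A₃ < D₁₀`).**  Let `X = A₃` be embedded in
`Y = D₁₀ = SO₂₀` via the 20-dimensional irreducible representation `δ = 2ω₂ = (0,2,0)`,
and let `lam` be one of the half-spin weights `λ₉, λ₁₀` of `Y`.  Then
`V_Y(lam)↓X = V_X(3ω₁+ω₂+ω₃) ⊕ V_X(ω₁+ω₂+3ω₃)`, i.e. the restriction of the character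
is the sum of the two irreducible characters of highest weights `(3,1,1)` and `(1,1,3)`;
in particular `V_Y(lam)↓X` is multiplicity-free. -/
theorem thm_spin_A3_D10 (lam : Fin 10 → ℕ)
    (hlam : lam = e 10 9 ∨ lam = e 10 10) :
    (∀ w, WtSys CType.D 10 3 (2 • e 3 2) w →
      ∀ f, IsCharY CType.D 10 lam f →
        resChar w f * altA 3 (rhoA 3)
          = altA 3 (slWt 3 ![3, 1, 1] + rhoA 3) + altA 3 (slWt 3 ![1, 1, 3] + rhoA 3)) ∧
    IsMFRes CType.D 10 3 (2 • e 3 2) lam := by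
  refine ⟨fun w hw f hf => SpinAux.part1 lam hlam w hw f hf, fun w hw f hf => ?_⟩
  have hne : (![3, 1, 1] : Fin 3 → ℕ) ≠ ![1, 1, 3] := by decide
  refine ⟨Finsupp.single ![3, 1, 1] 1 + Finsupp.single ![1, 1, 3] 1, ?_, ?_⟩
  · unfold Decomp
    rw [SpinAux.part1 lam hlam w hw f hf, Finsupp.sum_add_index', Finsupp.sum_single_index,
      Finsupp.sum_single_index]
    · simp
    · simp
    · simp
    · simp
    · intro a b c; push_cast; rw [add_smul]
  · intro μ
    rw [Finsupp.add_apply, Finsupp.single_apply, Finsupp.single_apply]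
    split_ifs with h1 h2
    · exact absurd (h1.trans h2.symm) hne
    all_goals norm_num
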